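/- arXiv:2507.01345 — 3 statements merged into one kernel-verified Lean document; each statement's English description precedes it below -/
import Mathlib

section
/- Let I₁, I₂ ⊆ ℝ be open intervals with base points s₁ ∈ I₁ and s₂ ∈ I₂, and let γ : I₁ → ℂ and ξ : I₂ → ℂ be continuously differentiable curves such that γ'(x) ≠ 0 for all x ∈ I₁, ξ'(y) ≠ 0 for all y ∈ I₂, and ξ(y) ≠ 0 for all y ∈ I₂. Then the map F̌ is a Lagrangian immersion into ℂ²: for every (x,y) ∈ I₁ × I₂ one has ∂F̌/∂x(x,y) = γ'(x)·(ξ(y), −conj(γ(x))) and ∂F̌/∂y(x,y) = ξ'(y)·(γ(x), conj(ξ(y))), these two vectors of ℂ² are linearly independent over ℝ, and ω₀(∂F̌/∂x(x,y), ∂F̌/∂y(x,y)) = 0. -/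
open Complex

/-- The primitive `β_γ` of the pullback of the Liouville form by a curve `γ`
(with given derivative `γ'` and base point `s₀`). -/
noncomputable def beta (γ γ' : ℝ → ℂ) (s₀ s : ℝ) : ℝ :=
  ∫ t in s₀..s, ((starRingEnd ℂ) (γ t) * γ' t).im

/-- The Castro–Lerma profile surface `F̌ : I₁ × I₂ → ℂ²`. -/
noncomputable def Fcheck (γ ξ γ' ξ' : ℝ → ℂ) (s₁ s₂ : ℝ) (x y : ℝ) : ℂ × ℂ :=
  (γ x * ξ y,
    ((1/2 * (‖ξ y‖ ^ 2 - ‖γ x‖ ^ 2) : ℝ) : ℂ)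
      + Complex.I * ((beta ξ ξ' s₂ y - beta γ γ' s₁ x : ℝ) : ℂ))

/-- The standard symplectic form `ω₀` on `ℂ²`. -/
noncomputable def omega0 (v w : ℂ × ℂ) : ℝ :=
  ((starRingEnd ℂ) v.1 * w.1).im + ((starRingEnd ℂ) v.2 * w.2).im

/-!
The real and imaginary parts of `conj γ * γ'` are the derivatives of `‖γ‖² / 2` and of `β_γ`, so
`Φ_γ = ‖γ‖² / 2 + i β_γ` is a complex primitive of `γ' * conj γ` and
`F̌(x, y) = (γ(x) ξ(y), Φ_ξ(y) - Φ_γ(x))`. The partial derivatives are then complex multiples of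
`(ξ, -conj γ)` and `(γ, conj ξ)`, which are orthogonal for the Hermitian product of `ℂ²`. As `ω₀` is
the imaginary part of that product, this one orthogonality relation makes `F̌` Lagrangian, and an
immersion wherever both multiples are nonzero.
-/

open WithLp
open scoped ComplexConjugate

section Primitive

variable {J : Set ℝ} {s₀ s : ℝ}

theorem hasDerivAt_integral_of_continuousOn_ordConnected {E : Type*} [NormedAddCommGroup E]
    [NormedSpace ℝ E] [CompleteSpace E] {f : ℝ → E} (hJo : IsOpen J) (hJc : J.OrdConnected)
    (hf : ContinuousOn f J) (hs₀ : s₀ ∈ J) (hs : s ∈ J) :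
    HasDerivAt (fun u => ∫ t in s₀..u, f t) (f s) s :=
  intervalIntegral.integral_hasDerivAt_right
    (hf.mono (hJc.uIcc_subset hs₀ hs)).intervalIntegrable
    (hf.stronglyMeasurableAtFilter hJo s hs)
    (hf.continuousAt (hJo.mem_nhds hs))

theorem hasDerivAt_beta {γ γ' : ℝ → ℂ} (hJo : IsOpen J) (hJc : J.OrdConnected)
    (hγ : ContinuousOn γ J) (hγ' : ContinuousOn γ' J) (hs₀ : s₀ ∈ J) (hs : s ∈ J) :
    HasDerivAt (beta γ γ' s₀) (conj (γ s) * γ' s).im s :=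
  hasDerivAt_integral_of_continuousOn_ordConnected hJo hJc
    (continuous_im.comp_continuousOn ((continuous_conj.comp_continuousOn hγ).mul hγ')) hs₀ hs

theorem hasDerivAt_half_norm_sq {F : Type*} [NormedAddCommGroup F] [InnerProductSpace ℝ F]
    {γ : ℝ → F} {v : F} (hγ : HasDerivAt γ v s) :
    HasDerivAt (fun t => 1 / 2 * ‖γ t‖ ^ 2) (inner ℝ (γ s) v) s :=
  (hγ.norm_sq.const_mul (1 / 2 : ℝ)).congr_deriv (by ring)

/-- The complex primitive `Φ_γ = ‖γ‖² / 2 + i β_γ` of `γ' * conj γ`, in terms of which the second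
component of `F̌` is `Φ_ξ(y) - Φ_γ(x)`. It is normalised by `Φ_γ(s₀) = ‖γ(s₀)‖² / 2`. -/
noncomputable def complexBeta (γ γ' : ℝ → ℂ) (s₀ s : ℝ) : ℂ :=
  ((1 / 2 * ‖γ s‖ ^ 2 : ℝ) : ℂ) + (beta γ γ' s₀ s : ℂ) * I

theorem hasDerivAt_complexBeta {γ γ' : ℝ → ℂ} (hJo : IsOpen J) (hJc : J.OrdConnected)
    (hγ : ∀ t ∈ J, HasDerivAt γ (γ' t) t) (hγ' : ContinuousOn γ' J) (hs₀ : s₀ ∈ J) (hs : s ∈ J) :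
    HasDerivAt (complexBeta γ γ' s₀) (γ' s * conj (γ s)) s := by
  have hβ : HasDerivAt (beta γ γ' s₀) (conj (γ s) * γ' s).im s :=
    hasDerivAt_beta hJo hJc (HasDerivAt.continuousOn hγ) hγ' hs₀ hs
  have hnorm : HasDerivAt (fun t => 1 / 2 * ‖γ t‖ ^ 2) (inner ℝ (γ s) (γ' s)) s :=
    hasDerivAt_half_norm_sq (hγ s hs)
  refine (hnorm.ofReal_comp.add (hβ.ofReal_comp.mul_const I)).congr_deriv ?_
  rw [Complex.inner, mul_comm (conj (γ s)), re_add_im]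

end Primitive

section ProfileSurface

variable {γ ξ γ' ξ' : ℝ → ℂ} {s₁ s₂ x y : ℝ}

theorem Fcheck_eq_complexBeta_sub (γ ξ γ' ξ' : ℝ → ℂ) (s₁ s₂ x y : ℝ) :
    Fcheck γ ξ γ' ξ' s₁ s₂ x y = (γ x * ξ y, complexBeta ξ ξ' s₂ y - complexBeta γ γ' s₁ x) := by
  simp only [Fcheck, complexBeta, Prod.mk.injEq, true_and]
  push_cast
  ring

theorem hasDerivAt_Fcheck_left {J : Set ℝ} (hJo : IsOpen J) (hJc : J.OrdConnected) (hs₁ : s₁ ∈ J)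
    (hγ : ∀ t ∈ J, HasDerivAt γ (γ' t) t) (hγ' : ContinuousOn γ' J) (hx : x ∈ J) :
    HasDerivAt (fun x' => Fcheck γ ξ γ' ξ' s₁ s₂ x' y)
      (γ' x • ((ξ y, -conj (γ x)) : ℂ × ℂ)) x := by
  simp only [Fcheck_eq_complexBeta_sub, Prod.smul_mk, smul_eq_mul, mul_neg]
  exact ((hγ x hx).mul_const (ξ y)).prodMk
    ((hasDerivAt_complexBeta hJo hJc hγ hγ' hs₁ hx).const_sub _)

theorem hasDerivAt_Fcheck_right {J : Set ℝ} (hJo : IsOpen J) (hJc : J.OrdConnected) (hs₂ : s₂ ∈ J)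
    (hξ : ∀ t ∈ J, HasDerivAt ξ (ξ' t) t) (hξ' : ContinuousOn ξ' J) (hy : y ∈ J) :
    HasDerivAt (fun y' => Fcheck γ ξ γ' ξ' s₁ s₂ x y')
      (ξ' y • ((γ x, conj (ξ y)) : ℂ × ℂ)) y := by
  simp only [Fcheck_eq_complexBeta_sub, Prod.smul_mk, smul_eq_mul, mul_comm (ξ' y) (γ x)]
  exact ((hξ y hy).const_mul (γ x)).prodMk
    ((hasDerivAt_complexBeta hJo hJc hξ hξ' hs₂ hy).sub_const _)

end ProfileSurface

section HermitianPlane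

theorem omega0_eq_im_inner (v w : ℂ × ℂ) : omega0 v w = (inner ℂ (toLp 2 v) (toLp 2 w)).im := by
  simp only [omega0, prod_inner_apply, RCLike.inner_apply', add_im]

theorem inner_smul_smul_conj_pair (a b c d : ℂ) :
    inner ℂ (toLp 2 (c • ((b, -conj a) : ℂ × ℂ))) (toLp 2 (d • ((a, conj b) : ℂ × ℂ))) = 0 := by
  simp only [prod_inner_apply, RCLike.inner_apply', Prod.smul_mk, smul_eq_mul, map_mul, map_neg,
    conj_conj]
  ring

theorem linearIndependent_pair_of_inner_eq_zero {𝕜 E : Type*} [RCLike 𝕜] [NormedAddCommGroup E]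
    [InnerProductSpace 𝕜 E] {v w : E} (hv : v ≠ 0) (hw : w ≠ 0) (h : inner 𝕜 v w = 0) :
    LinearIndependent 𝕜 ![v, w] := by
  refine linearIndependent_of_ne_zero_of_inner_eq_zero (Fin.forall_fin_two.2 ⟨hv, hw⟩) ?_
  simpa [Pairwise, Fin.forall_fin_two] using ⟨h, inner_eq_zero_symm.1 h⟩

theorem linearIndependent_smul_smul_conj_pair {a b c d : ℂ} (hab : a ≠ 0 ∨ b ≠ 0) (hc : c ≠ 0)
    (hd : d ≠ 0) :
    LinearIndependent ℂ ![c • ((b, -conj a) : ℂ × ℂ), d • ((a, conj b) : ℂ × ℂ)] := by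
  have hv : c • ((b, -conj a) : ℂ × ℂ) ≠ 0 :=
    smul_ne_zero hc fun h => by simp_all
  have hw : d • ((a, conj b) : ℂ × ℂ) ≠ 0 :=
    smul_ne_zero hd fun h => by simp_all
  have hindep := linearIndependent_pair_of_inner_eq_zero
    ((toLp_eq_zero 2).not.2 hv) ((toLp_eq_zero 2).not.2 hw) (inner_smul_smul_conj_pair a b c d)
  refine LinearIndependent.of_comp (WithLp.linearEquiv 2 ℂ (ℂ × ℂ)).symm.toLinearMap ?_
  rwa [← FinVec.map_eq]

end HermitianPlane

theorem lagrangian_immersion_ansatz_general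
    {I₁ I₂ : Set ℝ} (hI₁o : IsOpen I₁) (hI₂o : IsOpen I₂)
    (hI₁c : I₁.OrdConnected) (hI₂c : I₂.OrdConnected)
    {s₁ s₂ : ℝ} (hs₁ : s₁ ∈ I₁) (hs₂ : s₂ ∈ I₂)
    {γ ξ γ' ξ' : ℝ → ℂ}
    (hγ : ∀ x ∈ I₁, HasDerivAt γ (γ' x) x)
    (hξ : ∀ y ∈ I₂, HasDerivAt ξ (ξ' y) y)
    (hγ'c : ContinuousOn γ' I₁) (hξ'c : ContinuousOn ξ' I₂)
    {x y : ℝ} (hx : x ∈ I₁) (hy : y ∈ I₂)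
    (hγ'x : γ' x ≠ 0) (hξ'y : ξ' y ≠ 0) (hγξ : γ x ≠ 0 ∨ ξ y ≠ 0) :
    HasDerivAt (fun x' => Fcheck γ ξ γ' ξ' s₁ s₂ x' y)
        (γ' x • ((ξ y, -conj (γ x)) : ℂ × ℂ)) x ∧
    HasDerivAt (fun y' => Fcheck γ ξ γ' ξ' s₁ s₂ x y')
        (ξ' y • ((γ x, conj (ξ y)) : ℂ × ℂ)) y ∧
    LinearIndependent ℂ
      ![γ' x • ((ξ y, -conj (γ x)) : ℂ × ℂ), ξ' y • ((γ x, conj (ξ y)) : ℂ × ℂ)] ∧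
    omega0 (γ' x • ((ξ y, -conj (γ x)) : ℂ × ℂ)) (ξ' y • ((γ x, conj (ξ y)) : ℂ × ℂ)) = 0 := by
  refine ⟨hasDerivAt_Fcheck_left hI₁o hI₁c hs₁ hγ hγ'c hx,
    hasDerivAt_Fcheck_right hI₂o hI₂c hs₂ hξ hξ'c hy,
    linearIndependent_smul_smul_conj_pair hγξ hγ'x hξ'y, ?_⟩
  rw [omega0_eq_im_inner, inner_smul_smul_conj_pair, zero_im]

/-- `F̌` is a Lagrangian immersion: the partial derivatives are
`γ'(x)·(ξ(y), −conj(γ(x)))` and `ξ'(y)·(γ(x), conj(ξ(y)))`, these are linearly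
independent over `ℝ`, and `ω₀` vanishes on them. -/
theorem lagrangian_immersion_ansatz
    (I₁ I₂ : Set ℝ) (hI₁o : IsOpen I₁) (hI₂o : IsOpen I₂)
    (hI₁c : I₁.OrdConnected) (hI₂c : I₂.OrdConnected)
    (s₁ s₂ : ℝ) (hs₁ : s₁ ∈ I₁) (hs₂ : s₂ ∈ I₂)
    (γ ξ γ' ξ' : ℝ → ℂ)
    (hγ : ∀ x ∈ I₁, HasDerivAt γ (γ' x) x)
    (hξ : ∀ y ∈ I₂, HasDerivAt ξ (ξ' y) y)
    (hγ'c : ContinuousOn γ' I₁) (hξ'c : ContinuousOn ξ' I₂)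
    (hγ'0 : ∀ x ∈ I₁, γ' x ≠ 0) (hξ'0 : ∀ y ∈ I₂, ξ' y ≠ 0)
    (hξ0 : ∀ y ∈ I₂, ξ y ≠ 0)
    (x y : ℝ) (hx : x ∈ I₁) (hy : y ∈ I₂) :
    HasDerivAt (fun x' => Fcheck γ ξ γ' ξ' s₁ s₂ x' y)
        (γ' x • ((ξ y, -((starRingEnd ℂ) (γ x))) : ℂ × ℂ)) x ∧
    HasDerivAt (fun y' => Fcheck γ ξ γ' ξ' s₁ s₂ x y')
        (ξ' y • ((γ x, (starRingEnd ℂ) (ξ y)) : ℂ × ℂ)) y ∧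
    LinearIndependent ℝ
      ![γ' x • ((ξ y, -((starRingEnd ℂ) (γ x))) : ℂ × ℂ),
        ξ' y • ((γ x, (starRingEnd ℂ) (ξ y)) : ℂ × ℂ)] ∧
    omega0 (γ' x • ((ξ y, -((starRingEnd ℂ) (γ x))) : ℂ × ℂ))
        (ξ' y • ((γ x, (starRingEnd ℂ) (ξ y)) : ℂ × ℂ)) = 0 := by
  obtain ⟨hdx, hdy, hindep, hω⟩ := lagrangian_immersion_ansatz_general hI₁o hI₂o hI₁c hI₂c hs₁ hs₂
    hγ hξ hγ'c hξ'c hx hy (hγ'0 x hx) (hξ'0 y hy) (.inr (hξ0 y hy))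
  exact ⟨hdx, hdy, hindep.restrict_scalars' ℝ, hω⟩
end

section
/- Let μ₁, μ₂, μ₃ : ℂ³ → ℝ be as defined, and at each point of ℂ³ let M be the complex 3×3 matrix with entries M_{jk} := i·∂μ_j/∂x_k − ∂μ_j/∂y_k (that is, M_{jk} = 2i·∂μ_j/∂z̄_k, where ∂/∂z̄_k = (1/2)(∂/∂x_k + i·∂/∂y_k)). Then det M = exp(conj(z₃))·(|z₁|² + |z₂|² + |z₁|²·|z₂|²). In particular, whenever (z₁, z₂) ≠ (0, 0), the argument of det M equals −Im(z₃) modulo 2π, so the Lagrangian angle θ of the level sets of (μ₁, μ₂, μ₃) satisfies θ + Im(z₃) = const, i.e. the smooth part of each level set is a Lagrangian translating soliton. -/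
open Complex Real

/-- Partial derivative `∂f/∂x_k` of `f : ℝ³ × ℝ³ → ℝ` in the real coordinates
`(x₁, x₂, x₃, y₁, y₂, y₃)` on `ℂ³ ≅ ℝ⁶`. -/
noncomputable def pdx (f : (Fin 3 → ℝ) → (Fin 3 → ℝ) → ℝ) (k : Fin 3)
    (x y : Fin 3 → ℝ) : ℝ :=
  deriv (fun t => f (Function.update x k t) y) (x k)

/-- Partial derivative `∂f/∂y_k`. -/
noncomputable def pdy (f : (Fin 3 → ℝ) → (Fin 3 → ℝ) → ℝ) (k : Fin 3)
    (x y : Fin 3 → ℝ) : ℝ :=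
  deriv (fun t => f x (Function.update y k t)) (y k)

/-- The functions `μ₁, μ₂, μ₃ : ℂ³ → ℝ` (in real coordinates `z_j = x_j + i y_j`). -/
noncomputable def mu : Fin 3 → (Fin 3 → ℝ) → (Fin 3 → ℝ) → ℝ :=
  ![fun x y => x 2 - (x 0 ^ 2 + y 0 ^ 2) / 2,
    fun x y => x 2 - (x 1 ^ 2 + y 1 ^ 2) / 2,
    fun x y => Real.exp (x 2) *
      ((x 0 * y 1 + x 1 * y 0) * Real.cos (y 2) + (x 0 * x 1 - y 0 * y 1) * Real.sin (y 2))]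

/-- The complex matrix `M_{jk} = i·∂μ_j/∂x_k − ∂μ_j/∂y_k = 2i·∂μ_j/∂z̄_k`, whose rows
encode `J∇μ_j`, so that `arg det M` is the Lagrangian angle of the level set. -/
noncomputable def Mmat (x y : Fin 3 → ℝ) : Matrix (Fin 3) (Fin 3) ℂ :=
  Matrix.of fun j k =>
    Complex.I * ((pdx (mu j) k x y : ℝ) : ℂ) - ((pdy (mu j) k x y : ℝ) : ℂ)

/-!
The `k`-th entry of the `j`-th row of `M` is `2i ∂μ_j/∂z̄_k`, and `2i ∂/∂z̄` of a real function is
read off from its real differential: it is `i · conj (h v)` for `Re h` and `-conj (h v)` for `Im h`,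
where `h` is complex linear. Since `μ₁ = Re z₃ - |z₁|²/2`, `μ₂ = Re z₃ - |z₂|²/2` and
`μ₃ = Im (z₁ z₂ e^{z₃})` with `z₁ z₂ e^{z₃}` holomorphic, the rows of `M` are `(-i z₁, 0, i)`,
`(0, -i z₂, i)` and minus the conjugate of `(z₂, z₁, z₁ z₂) e^{z₃}`. In the determinant each
of `z₁`, `z₂` gets paired with its conjugate, so `conj e^{z₃}` is multiplied by a nonnegative real
number that vanishes only for `z₁ = z₂ = 0`.
-/

open scoped ComplexConjugate

section ComplexPoint

variable {ι : Type*}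

/-- The point of `ℂ^ι` with real parts `x` and imaginary parts `y`. It is used to regard functions
of the real coordinates `(x, y)` as functions of the complex coordinates `z = x + i y`. -/
def complexPoint (x y : ι → ℝ) : ι → ℂ := fun j => x j + y j * I

theorem norm_sq_complexPoint (x y : ι → ℝ) (j : ι) :
    ‖complexPoint x y j‖ ^ 2 = x j ^ 2 + y j ^ 2 := by
  rw [complexPoint, ← normSq_eq_norm_sq, normSq_add_mul_I]

variable [DecidableEq ι]

theorem complexPoint_update_left (x y : ι → ℝ) (k : ι) (t : ℝ) :
    complexPoint (Function.update x k t) y =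
      Function.update (complexPoint x y) k (t + y k * I) := by
  ext j
  obtain rfl | hj := eq_or_ne j k <;> simp [complexPoint, *]

theorem complexPoint_update_right (x y : ι → ℝ) (k : ι) (t : ℝ) :
    complexPoint x (Function.update y k t) =
      Function.update (complexPoint x y) k (x k + t * I) := by
  ext j
  obtain rfl | hj := eq_or_ne j k <;> simp [complexPoint, *]

variable [Finite ι]

theorem hasDerivAt_complexPoint_update_left (x y : ι → ℝ) (k : ι) :
    HasDerivAt (fun t => complexPoint (Function.update x k t) y) (Pi.single k 1) (x k) := by
  cases nonempty_fintype ι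
  have hline : HasDerivAt (fun t : ℝ => (t : ℂ) + y k * I) 1 (x k) :=
    (hasDerivAt_id (x k)).ofReal_comp.add_const _
  simpa [complexPoint_update_left, Function.comp_def] using
    (hasDerivAt_update (complexPoint x y) k _).scomp (x k) hline

theorem hasDerivAt_complexPoint_update_right (x y : ι → ℝ) (k : ι) :
    HasDerivAt (fun t => complexPoint x (Function.update y k t)) (I • Pi.single k 1) (y k) := by
  cases nonempty_fintype ι
  have hline : HasDerivAt (fun t : ℝ => (x k : ℂ) + t * I) I (y k) := by
    simpa using ((hasDerivAt_id (y k)).ofReal_comp.mul_const I).const_add (x k : ℂ)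
  simpa [complexPoint_update_right, Function.comp_def] using
    (hasDerivAt_update (complexPoint x y) k _).scomp (y k) hline

end ComplexPoint

section TwoIDbar

variable {V : Type*} [NormedAddCommGroup V] [NormedSpace ℂ V]

/-- `2i` times the conjugate-linear part of a real functional `L` on a complex space. When `L` is
the real differential of `f` and `v` is the `k`-th coordinate vector, it is `2i ∂f/∂z̄_k`. -/
noncomputable def twoIDbar (L : V →L[ℝ] ℝ) (v : V) : ℂ := I * L v - L (I • v)

theorem twoIDbar_sub (L L' : V →L[ℝ] ℝ) (v : V) :
    twoIDbar (L - L') v = twoIDbar L v - twoIDbar L' v := by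
  simp only [twoIDbar, sub_apply, ofReal_sub]
  ring

theorem twoIDbar_re_comp (h : V →L[ℂ] ℂ) (v : V) :
    twoIDbar (reCLM ∘L h.restrictScalars ℝ) v = I * conj (h v) := by
  apply Complex.ext <;> simp [twoIDbar]

theorem twoIDbar_im_comp (h : V →L[ℂ] ℂ) (v : V) :
    twoIDbar (imCLM ∘L h.restrictScalars ℝ) v = -conj (h v) := by
  apply Complex.ext <;> simp [twoIDbar]

theorem twoIDbar_innerSL_comp (a : ℂ) (h : V →L[ℂ] ℂ) (v : V) :
    twoIDbar (innerSL ℝ a ∘L h.restrictScalars ℝ) v = I * (a * conj (h v)) := by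
  have hinner : innerSL ℝ a ∘L h.restrictScalars ℝ =
      reCLM ∘L (conj a • h).restrictScalars ℝ := by
    ext w
    simp [Complex.inner, mul_comm]
  rw [hinner, twoIDbar_re_comp]
  simp

end TwoIDbar

theorem hasFDerivAt_norm_sq_div_two {G F : Type*} [NormedAddCommGroup G] [NormedSpace ℝ G]
    [NormedAddCommGroup F] [InnerProductSpace ℝ F] {f : G → F} {f' : G →L[ℝ] F} {p : G}
    (hf : HasFDerivAt f f' p) :
    HasFDerivAt (fun q => ‖f q‖ ^ 2 / 2) (innerSL ℝ (f p) ∘L f') p := by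
  simpa [div_eq_inv_mul, smul_smul, ← Nat.cast_smul_eq_nsmul ℝ] using
    hf.norm_sq.const_mul (2⁻¹ : ℝ)

section WirtingerRow

variable {f : (Fin 3 → ℝ) → (Fin 3 → ℝ) → ℝ} {F : (Fin 3 → ℂ) → ℝ} {L : (Fin 3 → ℂ) →L[ℝ] ℝ}
  {x y : Fin 3 → ℝ}

theorem pdx_eq_of_hasFDerivAt (hf : ∀ x y, f x y = F (complexPoint x y))
    (hF : HasFDerivAt F L (complexPoint x y)) (k : Fin 3) : pdx f k x y = L (Pi.single k 1) := by
  simp only [pdx, hf]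
  exact (hF.comp_hasDerivAt_of_eq _ (hasDerivAt_complexPoint_update_left x y k) (by simp)).deriv

theorem pdy_eq_of_hasFDerivAt (hf : ∀ x y, f x y = F (complexPoint x y))
    (hF : HasFDerivAt F L (complexPoint x y)) (k : Fin 3) :
    pdy f k x y = L (I • Pi.single k 1) := by
  simp only [pdy, hf]
  exact (hF.comp_hasDerivAt_of_eq _ (hasDerivAt_complexPoint_update_right x y k) (by simp)).deriv

theorem Mmat_apply_eq_twoIDbar {j : Fin 3} (hmu : ∀ x y, mu j x y = F (complexPoint x y))
    (hF : HasFDerivAt F L (complexPoint x y)) (k : Fin 3) :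
    Mmat x y j k = twoIDbar L (Pi.single k 1) := by
  simp only [Mmat, Matrix.of_apply, pdx_eq_of_hasFDerivAt hmu hF, pdy_eq_of_hasFDerivAt hmu hF,
    twoIDbar]

theorem Mmat_apply_of_re_sub_norm_sq {j l m : Fin 3}
    (hmu : ∀ x y, mu j x y = (complexPoint x y l).re - ‖complexPoint x y m‖ ^ 2 / 2) (k : Fin 3) :
    Mmat x y j k = I * ((Pi.single k 1 : Fin 3 → ℂ) l -
      complexPoint x y m * (Pi.single k 1 : Fin 3 → ℂ) m) := by
  have hproj (i : Fin 3) := (hasFDerivAt_apply (𝕜 := ℂ) i (complexPoint x y)).restrictScalars ℝ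
  have hF := (reCLM.hasFDerivAt.comp _ (hproj l)).sub (hasFDerivAt_norm_sq_div_two (hproj m))
  have hconj (i : Fin 3) :
      conj ((Pi.single k 1 : Fin 3 → ℂ) i) = (Pi.single k 1 : Fin 3 → ℂ) i := by
    rw [Pi.single_apply]
    split_ifs <;> simp
  rw [Mmat_apply_eq_twoIDbar hmu hF, twoIDbar_sub, twoIDbar_re_comp, twoIDbar_innerSL_comp]
  simp only [ContinuousLinearMap.proj_apply, hconj, mul_sub]

theorem Mmat_apply_of_im {H : (Fin 3 → ℂ) → ℂ} {H' : (Fin 3 → ℂ) →L[ℂ] ℂ} {j : Fin 3}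
    (hmu : ∀ x y, mu j x y = (H (complexPoint x y)).im)
    (hH : HasFDerivAt H H' (complexPoint x y)) (k : Fin 3) :
    Mmat x y j k = -conj (H' (Pi.single k 1)) := by
  rw [Mmat_apply_eq_twoIDbar hmu (imCLM.hasFDerivAt.comp _ (hH.restrictScalars ℝ)),
    twoIDbar_im_comp]

end WirtingerRow

section Rows

variable (x y : Fin 3 → ℝ)

theorem mu_zero_eq_re_sub_norm_sq :
    mu 0 x y = (complexPoint x y 2).re - ‖complexPoint x y 0‖ ^ 2 / 2 := by
  rw [norm_sq_complexPoint]
  simp [mu, complexPoint]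

theorem mu_one_eq_re_sub_norm_sq :
    mu 1 x y = (complexPoint x y 2).re - ‖complexPoint x y 1‖ ^ 2 / 2 := by
  rw [norm_sq_complexPoint]
  simp [mu, complexPoint]

theorem mu_two_eq_im :
    mu 2 x y = (complexPoint x y 0 * complexPoint x y 1 * Complex.exp (complexPoint x y 2)).im := by
  simp [mu, complexPoint, exp_re, exp_im]
  ring

theorem Mmat_zero : Mmat x y 0 = ![-(I * complexPoint x y 0), 0, I] := by
  ext k
  rw [Mmat_apply_of_re_sub_norm_sq mu_zero_eq_re_sub_norm_sq]
  fin_cases k <;> simp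

theorem Mmat_one : Mmat x y 1 = ![0, -(I * complexPoint x y 1), I] := by
  ext k
  rw [Mmat_apply_of_re_sub_norm_sq mu_one_eq_re_sub_norm_sq]
  fin_cases k <;> simp

theorem Mmat_two :
    letI z := complexPoint x y
    Mmat x y 2 = ![-conj (z 1 * Complex.exp (z 2)), -conj (z 0 * Complex.exp (z 2)),
      -conj (z 0 * z 1 * Complex.exp (z 2))] := by
  have hproj (i : Fin 3) := hasFDerivAt_apply (𝕜 := ℂ) i (complexPoint x y)
  have hH := ((hproj 0).mul (hproj 1)).mul (hproj 2).cexp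
  ext k
  rw [Mmat_apply_of_im mu_two_eq_im hH]
  fin_cases k <;> simp [mul_comm]

theorem Mmat_eq :
    letI z := complexPoint x y
    Mmat x y = !![-(I * z 0), 0, I; 0, -(I * z 1), I;
      -conj (z 1 * Complex.exp (z 2)), -conj (z 0 * Complex.exp (z 2)),
      -conj (z 0 * z 1 * Complex.exp (z 2))] := by
  refine funext fun j => ?_
  fin_cases j
  exacts [Mmat_zero x y, Mmat_one x y, Mmat_two x y]

end Rows

theorem det_soliton_matrix (a b w : ℂ) :
    !![-(I * a), 0, I; 0, -(I * b), I; -conj (b * w), -conj (a * w), -conj (a * b * w)].det =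
      conj w * ((‖a‖ ^ 2 + ‖b‖ ^ 2 + ‖a‖ ^ 2 * ‖b‖ ^ 2 : ℝ) : ℂ) := by
  simp only [Matrix.det_fin_three, Matrix.of_apply, Matrix.cons_val, map_mul, ofReal_add,
    ofReal_mul, ofReal_pow, ← mul_conj']
  linear_combination
    (-(a * conj a + b * conj b + a * conj a * (b * conj b)) * conj w) * I_sq

theorem norm_sq_add_norm_sq_add_mul_pos {E F : Type*} [NormedAddCommGroup E]
    [NormedAddCommGroup F] {a : E} {b : F} (h : (a, b) ≠ 0) :
    0 < ‖a‖ ^ 2 + ‖b‖ ^ 2 + ‖a‖ ^ 2 * ‖b‖ ^ 2 := by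
  obtain ha | hb : a ≠ 0 ∨ b ≠ 0 := by simpa [Prod.ext_iff, imp_iff_not_or] using h
  all_goals positivity

theorem exists_arg_exp_mul_real_eq (w : ℂ) {r : ℝ} (hr : 0 < r) :
    ∃ k : ℤ, (Complex.exp w * r).arg = w.im + 2 * π * k := by
  refine ⟨-toIocDiv Real.two_pi_pos (-π) w.im, ?_⟩
  rw [arg_mul_real hr, arg_exp, toIocMod, zsmul_eq_mul]
  push_cast
  ring

/-- `det M = e^{conj z₃}·(|z₁|² + |z₂|² + |z₁|²|z₂|²)`; in particular
if `(z₁, z₂) ≠ (0,0)` then `arg det M ≡ −Im z₃ (mod 2π)`, so the Lagrangian angle `θ`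
of the level sets of `(μ₁, μ₂, μ₃)` satisfies `θ + Im z₃ = const`: the smooth part of
each level set is a Lagrangian translating soliton. -/
theorem det_M_eq (x y : Fin 3 → ℝ) :
    (letI z : Fin 3 → ℂ := fun j => (x j : ℂ) + (y j : ℂ) * Complex.I
     (Mmat x y).det
        = Complex.exp ((starRingEnd ℂ) (z 2))
          * ((‖z 0‖ ^ 2 + ‖z 1‖ ^ 2
              + ‖z 0‖ ^ 2 * ‖z 1‖ ^ 2 : ℝ) : ℂ)) ∧
    (letI z : Fin 3 → ℂ := fun j => (x j : ℂ) + (y j : ℂ) * Complex.I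
     (z 0, z 1) ≠ ((0 : ℂ), (0 : ℂ)) →
      ∃ k : ℤ, ((Mmat x y).det).arg = -(z 2).im + 2 * π * k) := by
  have hdet : (Mmat x y).det = Complex.exp (conj (complexPoint x y 2)) *
      ((‖complexPoint x y 0‖ ^ 2 + ‖complexPoint x y 1‖ ^ 2
        + ‖complexPoint x y 0‖ ^ 2 * ‖complexPoint x y 1‖ ^ 2 : ℝ) : ℂ) := by
    rw [Mmat_eq, det_soliton_matrix, exp_conj]
  refine ⟨hdet, fun hz => ?_⟩
  rw [hdet]
  exact exists_arg_exp_mul_real_eq _ (norm_sq_add_norm_sq_add_mul_pos hz)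
end

section
/- Let m ≥ 2 be an integer, μ > 0, let l̃ be the Lawlor neck profile curve on I = (−π/(2(m−1)), π/(2(m−1))), and let β(s) := ∫₀^{s} |l̃(t)|² dt. Define G : I × ℝ → ℂ² by G(x,y) := (μ·y·l̃(x), (1/2)(y² − μ²|l̃(x)|²) − i·μ²·β(x)). Then G is injective, and G(x, −y) = (−G₁(x,y), G₂(x,y)) for all (x,y) ∈ I × ℝ; i.e. the image of G is invariant under the C₂-action (z₁, z₂) ↦ (−z₁, z₂) composed with the reflection y ↦ −y of the domain. (This is the profile surface F̌_{(b)} producing the SO(m−1)-invariant special Lagrangian L_{(b)}.) -/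
open Complex Real

/-- The Lawlor neck profile curve
`l̃(s) = (cos((m−1)s))^{−1/(m−1)}·e^{is}` on `(−π/(2(m−1)), π/(2(m−1)))`. -/
noncomputable def lawlor (m : ℕ) (s : ℝ) : ℂ :=
  ((Real.cos (((m : ℝ) - 1) * s) ^ (-(1 : ℝ) / ((m : ℝ) - 1)) : ℝ) : ℂ)
    * Complex.exp ((s : ℂ) * Complex.I)

/-- `β(s) = ∫₀^s |l̃(t)|² dt`. -/
noncomputable def betaL (m : ℕ) (s : ℝ) : ℝ :=
  ∫ t in (0 : ℝ)..s, ‖lawlor m t‖ ^ 2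

/-- The profile surface `F̌_{(b)}`:
`G(x,y) = (μ·y·l̃(x), (1/2)(y² − μ²|l̃(x)|²) − i·μ²·β(x))`. -/
noncomputable def Gb (m : ℕ) (μ : ℝ) (x y : ℝ) : ℂ × ℂ :=
  (((μ * y : ℝ) : ℂ) * lawlor m x,
    ((1 / 2 * (y ^ 2 - μ ^ 2 * ‖lawlor m x‖ ^ 2) : ℝ) : ℂ)
      - Complex.I * ((μ ^ 2 * betaL m x : ℝ) : ℂ))

/-! The imaginary part of the second coordinate of `G(x, y)` is `-μ² β(x)`. Since `β` is strictly
increasing, it determines `x`, and then the first coordinate `μ y l̃(x)` determines `y`, because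
`l̃(x) ≠ 0`. -/

theorem strictMonoOn_intervalIntegral_of_pos {f : ℝ → ℝ} {s : Set ℝ} {a : ℝ}
    (hs : s.OrdConnected) (hf : ∀ x ∈ s, IntervalIntegrable f MeasureTheory.volume a x)
    (hpos : ∀ x ∈ interior s, 0 < f x) : StrictMonoOn (fun x => ∫ t in a..x, f t) s := by
  intro x hx y hy hxy
  rw [← sub_pos, intervalIntegral.integral_interval_sub_left (hf y hy) (hf x hx)]
  have hsub : Set.Ioo x y ⊆ interior s :=
    interior_maximal (Set.Ioo_subset_Icc_self.trans (hs.out hx hy)) isOpen_Ioo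
  exact intervalIntegral.intervalIntegral_pos_of_pos_on ((hf x hx).symm.trans (hf y hy))
    (fun t ht => hpos t (hsub ht)) hxy

theorem cos_mul_pos_of_abs_lt {c x : ℝ} (hx : |x| < π / (2 * c)) : 0 < Real.cos (c * x) := by
  have hc : 0 < c := by
    by_contra! hc
    exact ((abs_nonneg x).trans_lt hx).not_ge
      (div_nonpos_of_nonneg_of_nonpos Real.pi_pos.le (by linarith))
  have hcx : |c * x| < π / 2 := by
    rw [abs_mul, abs_of_pos hc]
    calc c * |x| < c * (π / (2 * c)) := mul_lt_mul_of_pos_left hx hc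
      _ = π / 2 := by field_simp
  exact Real.cos_pos_of_mem_Ioo (abs_lt.mp hcx)

/-- The parameter interval `I = (−π/(2(m−1)), π/(2(m−1)))` of the Lawlor neck profile curve. It is
reducible, so that results about it apply to the explicit `Set.Ioo`. -/
abbrev lawlorInterval (m : ℕ) : Set ℝ :=
  Set.Ioo (-(π / (2 * ((m : ℝ) - 1)))) (π / (2 * ((m : ℝ) - 1)))

section Lawlor

variable {m : ℕ} {x : ℝ}

theorem cos_pos_of_mem_lawlorInterval (hx : x ∈ lawlorInterval m) :
    0 < Real.cos (((m : ℝ) - 1) * x) :=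
  cos_mul_pos_of_abs_lt (abs_lt.mpr hx)

theorem zero_mem_lawlorInterval_of_mem (hx : x ∈ lawlorInterval m) : 0 ∈ lawlorInterval m :=
  abs_lt.mp (abs_zero.trans_lt ((abs_nonneg x).trans_lt (abs_lt.mpr hx)))

theorem lawlor_ne_zero (hx : x ∈ lawlorInterval m) : lawlor m x ≠ 0 :=
  mul_ne_zero
    (Complex.ofReal_ne_zero.mpr (Real.rpow_pos_of_pos (cos_pos_of_mem_lawlorInterval hx) _).ne')
    (Complex.exp_ne_zero _)

theorem continuousOn_lawlor (m : ℕ) : ContinuousOn (lawlor m) (lawlorInterval m) := by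
  have hmodulus : ContinuousOn
      (fun s => Real.cos (((m : ℝ) - 1) * s) ^ (-(1 : ℝ) / ((m : ℝ) - 1))) (lawlorInterval m) :=
    ContinuousOn.rpow_const (by fun_prop)
      fun _ hs => Or.inl (cos_pos_of_mem_lawlorInterval hs).ne'
  exact (Complex.continuous_ofReal.comp_continuousOn hmodulus).mul (by fun_prop)

theorem strictMonoOn_betaL (m : ℕ) : StrictMonoOn (betaL m) (lawlorInterval m) := by
  refine strictMonoOn_intervalIntegral_of_pos Set.ordConnected_Ioo (fun x hx => ?_)
    fun x hx => pow_pos (norm_pos_iff.mpr (lawlor_ne_zero (interior_subset hx))) 2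
  have hsub : Set.uIcc 0 x ⊆ lawlorInterval m :=
    Set.ordConnected_Ioo.uIcc_subset (zero_mem_lawlorInterval_of_mem hx) hx
  exact (((continuousOn_lawlor m).norm.pow 2).mono hsub).intervalIntegrable

end Lawlor

section ProfileSurface

variable (m : ℕ) (μ : ℝ)

theorem Gb_snd_im (x y : ℝ) : (Gb m μ x y).2.im = -(μ ^ 2 * betaL m x) := by
  simp only [Gb, Complex.sub_im, Complex.ofReal_im, Complex.I_mul_im, Complex.ofReal_re, zero_sub]

theorem Gb_neg (x y : ℝ) : Gb m μ x (-y) = (-(Gb m μ x y).1, (Gb m μ x y).2) := by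
  simp [Gb]

variable {μ}

theorem injOn_Gb (hμ : μ ≠ 0) :
    Set.InjOn (fun p : ℝ × ℝ => Gb m μ p.1 p.2) (lawlorInterval m ×ˢ Set.univ) := by
  rintro ⟨x, y⟩ ⟨hx, -⟩ ⟨x', y'⟩ ⟨hx', -⟩ (h : Gb m μ x y = Gb m μ x' y')
  have hβ : betaL m x = betaL m x' := by
    have him := congrArg (fun z : ℂ × ℂ => z.2.im) h
    simp only [Gb_snd_im, neg_inj] at him
    exact mul_left_cancel₀ (pow_ne_zero 2 hμ) him
  obtain rfl : x = x' := (strictMonoOn_betaL m).injOn hx hx' hβ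
  have hy : μ * y = μ * y' :=
    Complex.ofReal_injective (mul_right_cancel₀ (lawlor_ne_zero hx) (congrArg Prod.fst h))
  rw [mul_left_cancel₀ hμ hy]

end ProfileSurface

/-- The profile surface `F̌_{(b)}` (producing the `SO(m−1)`-invariant
special Lagrangian `L_{(b)}`) is injective on `I × ℝ`, and intertwines `y ↦ −y` with
the `C₂`-action `(z₁, z₂) ↦ (−z₁, z₂)` on `ℂ²`. -/
theorem Fb_injective_and_C2_invariant
    (m : ℕ) (hm : 2 ≤ m) (μ : ℝ) (hμ : 0 < μ) :
    Set.InjOn (fun p : ℝ × ℝ => Gb m μ p.1 p.2)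
      ((Set.Ioo (-(π / (2 * ((m : ℝ) - 1)))) (π / (2 * ((m : ℝ) - 1)))) ×ˢ
        (Set.univ : Set ℝ)) ∧
    (∀ x ∈ Set.Ioo (-(π / (2 * ((m : ℝ) - 1)))) (π / (2 * ((m : ℝ) - 1))), ∀ y : ℝ,
      Gb m μ x (-y) = (-(Gb m μ x y).1, (Gb m μ x y).2)) :=
  ⟨injOn_Gb m hμ.ne', fun x _ y => Gb_neg m μ x y⟩
end
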